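/- arXiv:1206.6517 — 3 statements merged into one kernel-verified Lean document; each statement's English description precedes it below -/
import Mathlib

section
/- There are exactly 27 lines: the set of vectors L ∈ (Fin 7 → ℤ) with ⟨L,L⟩ = −1 and ⟨L,K⟩ = −1 is finite and has cardinality 27. -/
/-- The symmetric bilinear form of signature (1,6) on the lattice `Fin 7 → ℤ`,
modelling the Picard lattice of a smooth cubic surface. -/
def B (x y : Fin 7 → ℤ) : ℤ :=
  x 0 * y 0 - x 1 * y 1 - x 2 * y 2 - x 3 * y 3 - x 4 * y 4 - x 5 * y 5 - x 6 * y 6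

/-- The canonical class `K = (-3,1,1,1,1,1,1)`. -/
def K : Fin 7 → ℤ := ![-3, 1, 1, 1, 1, 1, 1]

/-- A line is a vector `L` with `⟨L,L⟩ = -1` and `⟨L,K⟩ = -1`. -/
def IsLine (L : Fin 7 → ℤ) : Prop := B L L = -1 ∧ B L K = -1

/-!
Write a class as `(d, x)` with `d : ℤ` and `x : Fin 6 → ℤ`. It is a line iff `∑ xᵢ = 1 - 3d` and
`∑ xᵢ² = d² + 1`, and Cauchy-Schwarz gives `(1 - 3d)² ≤ 6 (d² + 1)`, that is `3 (d - 1)² ≤ 8`,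
so `d ∈ {0, 1, 2}`. For these three degrees `1 - 3d = ±(d² + 1)`, so `±∑ xᵢ = ∑ xᵢ²`; since
`n ≤ n²` for every integer `n`, with equality only for `0` and `1`, the vector `±x` is the indicator
of a set of `d² + 1` points. The count is `C(6,1) + C(6,2) + C(6,5) = 6 + 15 + 6`.
-/

open Finset

section IndicatorVectors

variable {ι : Type*} [Fintype ι]

lemma sum_eq_sum_sq_iff_forall_eq_zero_or_one (x : ι → ℤ) :
    ∑ i, x i = ∑ i, x i ^ 2 ↔ ∀ i, x i = 0 ∨ x i = 1 := by
  rw [sum_eq_sum_iff_of_le fun i _ => Int.le_self_sq (x i)]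
  have eq_sq_iff (n : ℤ) : n = n ^ 2 ↔ n = 0 ∨ n = 1 := by
    rw [eq_comm, sq, ← IsIdempotentElem.iff_eq_zero_or_one, IsIdempotentElem]
  simp only [mem_univ, true_imp_iff, eq_sq_iff]

lemma sum_indicator_one_eq_card (S : Finset ι) :
    ∑ i, (S : Set ι).indicator (1 : ι → ℤ) i = #S := by
  classical
  simp [Set.indicator_apply]

lemma sum_eq_and_sum_sq_eq_iff_exists_indicator (k : ℕ) (x : ι → ℤ) :
    (∑ i, x i = k ∧ ∑ i, x i ^ 2 = k) ↔
      ∃ S : Finset ι, #S = k ∧ (S : Set ι).indicator 1 = x := by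
  classical
  constructor
  · rintro ⟨hsum, hsq⟩
    have zero_or_one := (sum_eq_sum_sq_iff_forall_eq_zero_or_one x).1 (hsum.trans hsq.symm)
    have indicator_eq : (({i | x i = 1} : Finset ι) : Set ι).indicator 1 = x := by
      ext i
      rcases zero_or_one i with hi | hi <;> simp [hi]
    refine ⟨_, ?_, indicator_eq⟩
    rw [← Nat.cast_inj (R := ℤ), ← sum_indicator_one_eq_card, indicator_eq, hsum]
  · rintro ⟨S, rfl, rfl⟩
    have sum_eq_sum_sq := (sum_eq_sum_sq_iff_forall_eq_zero_or_one _).2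
      (Set.indicator_eq_zero_or_self (S : Set ι) (1 : ι → ℤ))
    exact ⟨sum_indicator_one_eq_card S, sum_eq_sum_sq ▸ sum_indicator_one_eq_card S⟩

lemma sum_eq_units_mul_and_sum_sq_eq_iff_exists_indicator (ε : ℤˣ) (k : ℕ) (x : ι → ℤ) :
    (∑ i, x i = ε * k ∧ ∑ i, x i ^ 2 = k) ↔
      ∃ S : Finset ι, #S = k ∧ ε • (S : Set ι).indicator 1 = x := by
  have sum_smul : ∑ i, (ε • x) i = k ↔ ∑ i, x i = ε * k := by
    simp only [Pi.smul_apply, ← smul_sum]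
    rw [smul_eq_iff_eq_inv_smul, Int.units_inv_eq_self, Units.smul_def, smul_eq_mul]
  have sum_smul_sq : ∑ i, (ε • x) i ^ 2 = ∑ i, x i ^ 2 := by
    simp [Units.smul_def, mul_pow, ← Units.val_pow_eq_pow_val]
  have eq_smul_iff (v : ι → ℤ) : v = ε • x ↔ ε • v = x := by
    rw [← eq_inv_smul_iff, Int.units_inv_eq_self]
  rw [← sum_smul, ← sum_smul_sq, sum_eq_and_sum_sq_eq_iff_exists_indicator]
  simp only [eq_smul_iff]

end IndicatorVectors

lemma isLine_cons_iff (d : ℤ) (x : Fin 6 → ℤ) :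
    IsLine (Fin.cons d x) ↔ ∑ i, x i = 1 - 3 * d ∧ ∑ i, x i ^ 2 = d ^ 2 + 1 := by
  have self_pairing : B (Fin.cons d x) (Fin.cons d x) = d ^ 2 - ∑ i, x i ^ 2 := by
    rw [Fin.sum_univ_six]
    change d * d - x 0 * x 0 - x 1 * x 1 - x 2 * x 2 - x 3 * x 3 - x 4 * x 4 - x 5 * x 5 = _
    ring
  have canonical_pairing : B (Fin.cons d x) K = -3 * d - ∑ i, x i := by
    rw [Fin.sum_univ_six]
    change d * -3 - x 0 * 1 - x 1 * 1 - x 2 * 1 - x 3 * 1 - x 4 * 1 - x 5 * 1 = _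
    ring
  rw [IsLine, self_pairing, canonical_pairing]
  constructor <;> rintro ⟨h₁, h₂⟩ <;> constructor <;> linarith

lemma degree_mem_Icc_of_isLine_cons {d : ℤ} {x : Fin 6 → ℤ} (h : IsLine (Fin.cons d x)) :
    d ∈ Set.Icc 0 2 := by
  obtain ⟨hsum, hsq⟩ := (isLine_cons_iff d x).1 h
  have cauchy_schwarz : (1 - 3 * d) ^ 2 ≤ 6 * (d ^ 2 + 1) := by
    simpa [hsum, hsq] using sq_sum_le_card_mul_sum_sq (s := univ) (f := x)
  have dist_one_lt : |d - 1| < 2 := abs_lt_of_sq_lt_sq (by linarith) zero_le_two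
  constructor <;> linarith [abs_lt.1 dist_one_lt]

/-- The sign of the coordinates `1, …, 6` of a line of degree `d`: an exceptional curve (`d = 0`) is
`eᵢ` itself, whereas the strict transform of a plane curve of degree `d > 0` has class
`dℓ - ∑ eᵢ`, summed over the blown-up points it passes through. -/
def lineSign (d : ℕ) : ℤˣ := if d = 0 then 1 else -1

/-- The class of degree `d` attached to a set `S` of the six blown-up points. For `#S = d ^ 2 + 1`
and `d = 0, 1, 2` these are the exceptional curves, the strict transforms of the lines through two
points, and those of the conics through five points. -/
noncomputable def lineClass (d : ℕ) (S : Finset (Fin 6)) : Fin 7 → ℤ :=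
  Fin.cons (d : ℤ) (lineSign d • (S : Set (Fin 6)).indicator (1 : Fin 6 → ℤ))

lemma lineClass_injective2 : Function.Injective2 lineClass := by
  intro d e S T h
  obtain ⟨degree_eq, tail_eq⟩ := Fin.cons_inj.1 h
  obtain rfl := Nat.cast_injective degree_eq
  exact ⟨rfl, coe_injective (Set.indicator_one_inj ℤ (smul_left_cancel _ tail_eq))⟩

lemma one_sub_three_mul_eq_lineSign_mul {d : ℕ} (hd : d < 3) :
    (1 - 3 * d : ℤ) = lineSign d * (d ^ 2 + 1 : ℕ) := by
  interval_cases d <;> rfl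

lemma isLine_cons_natCast_iff {d : ℕ} (hd : d < 3) (x : Fin 6 → ℤ) :
    IsLine (Fin.cons (d : ℤ) x) ↔
      ∃ S : Finset (Fin 6), #S = d ^ 2 + 1 ∧ lineClass d S = Fin.cons (d : ℤ) x := by
  rw [isLine_cons_iff, one_sub_three_mul_eq_lineSign_mul hd]
  simp only [lineClass, Fin.cons_inj, true_and]
  exact_mod_cast sum_eq_units_mul_and_sum_sq_eq_iff_exists_indicator (lineSign d) (d ^ 2 + 1) x

lemma isLine_iff_exists_lineClass (L : Fin 7 → ℤ) :
    IsLine L ↔ ∃ d < 3, ∃ S : Finset (Fin 6), #S = d ^ 2 + 1 ∧ lineClass d S = L := by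
  constructor
  · induction L using Fin.consCases with | _ d x
    intro hL
    obtain ⟨d_nonneg, d_le⟩ := degree_mem_Icc_of_isLine_cons hL
    lift d to ℕ using d_nonneg
    have d_lt : d < 3 := by lia
    exact ⟨d, d_lt, (isLine_cons_natCast_iff d_lt x).1 hL⟩
  · rintro ⟨d, d_lt, S, hS, rfl⟩
    exact (isLine_cons_natCast_iff d_lt _).2 ⟨S, hS, rfl⟩

/-- The pairs `(d, S)` for which `lineClass d S` is a line. -/
def lineIndex : Finset (Σ _ : ℕ, Finset (Fin 6)) :=
  (range 3).sigma fun d => powersetCard (d ^ 2 + 1) univ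

lemma card_lineIndex : #lineIndex = 27 :=
  calc
    #lineIndex = ∑ d ∈ range 3, Nat.choose 6 (d ^ 2 + 1) := by
      simp only [lineIndex, card_sigma, card_powersetCard, card_univ, Fintype.card_fin]
    _ = 27 := rfl

lemma setOf_isLine_eq_image :
    {L | IsLine L} = (fun p : Σ _ : ℕ, Finset (Fin 6) => lineClass p.1 p.2) '' lineIndex := by
  ext L
  simp [isLine_iff_exists_lineClass, lineIndex, Sigma.exists, and_assoc]

/-- There are exactly 27 lines. -/
theorem twentyseven_lines :
    {L : Fin 7 → ℤ | IsLine L}.Finite ∧ {L : Fin 7 → ℤ | IsLine L}.ncard = 27 := by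
  have lineClass_injective : Function.Injective fun p : (Σ _ : ℕ, Finset (Fin 6)) =>
      lineClass p.1 p.2 := by
    rintro ⟨d, S⟩ ⟨e, T⟩ h
    obtain ⟨rfl, rfl⟩ := lineClass_injective2 h
    rfl
  rw [setOf_isLine_eq_image]
  refine ⟨lineIndex.finite_toSet.image _, ?_⟩
  rw [Set.ncard_image_of_injective _ lineClass_injective, Set.ncard_coe_finset, card_lineIndex]
end

section
/- Every line belongs to exactly 5 triangles: for each vector L ∈ (Fin 7 → ℤ) with ⟨L,L⟩ = −1 and ⟨L,K⟩ = −1, the set of triangles containing L has cardinality 5. -/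
/-- A triangle is a 3-element set of (pairwise distinct) lines summing to `-K`. -/
def IsTriangle (T : Finset (Fin 7 → ℤ)) : Prop :=
  T.card = 3 ∧ (∀ L ∈ T, IsLine L) ∧ ∑ L ∈ T, L = -K

/-!
If two lines `L`, `M` meet, i.e. `⟨L, M⟩ = 1`, then `-K - L - M` is a line and completes them to a
triangle; conversely any two sides of a triangle meet. So the triangles through `L` partition the
lines meeting `L` into pairs, and it remains to see that there are ten such lines. The form is
negative definite on the orthogonal complement of `K`, which forces `⟨L, M⟩ ∈ {0, 1}` for distinct
lines. As `⟨L, L⟩ = -1`, the number of lines meeting `L` is `1 + ∑ M, ⟨L, M⟩`, and this equals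
`1 - 9 * ⟨L, K⟩ = 10` because the 27 lines sum to `-9 • K`. The list of lines comes from the same
bounds: paired with the exceptional classes, they leave two values for each of the last six
coordinates of any other line.
-/

open Finset

section Form

variable (x y z v : Fin 7 → ℤ)

lemma B_eq_sub_sum : B x y = x 0 * y 0 - ∑ i : Fin 6, x i.succ * y i.succ := by
  simp only [B, Fin.sum_univ_succ, Fin.succ_zero_eq_one, Fin.succ_one_eq_two, Fin.reduceSucc,
    univ_unique, Fin.default_eq_zero, sum_singleton]
  ring

lemma B_comm : B x y = B y x := by
  simp only [B, mul_comm]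

/-- The form `B` bundled as a bilinear form, so that the linear map API applies to it. -/
def intersectionForm : LinearMap.BilinForm ℤ (Fin 7 → ℤ) :=
  LinearMap.mk₂ ℤ B (fun _ _ _ ↦ by simp only [B, Pi.add_apply]; ring)
    (fun _ _ _ ↦ by simp only [B, Pi.smul_apply, smul_eq_mul]; ring)
    (fun _ _ _ ↦ by simp only [B, Pi.add_apply]; ring)
    (fun _ _ _ ↦ by simp only [B, Pi.smul_apply, smul_eq_mul]; ring)

@[simp] lemma B_neg_left : B (-x) y = -B x y := LinearMap.map_neg₂ intersectionForm x y

@[simp] lemma B_neg_right : B x (-y) = -B x y := map_neg (intersectionForm x) y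

@[simp] lemma B_sub_left : B (x - y) z = B x z - B y z :=
  LinearMap.map_sub₂ intersectionForm x y z

@[simp] lemma B_sub_right : B x (y - z) = B x y - B x z :=
  map_sub (intersectionForm x) y z

lemma B_smul_left (c : ℤ) : B (c • x) y = c * B x y :=
  LinearMap.map_smul₂ intersectionForm c x y

lemma B_smul_right (c : ℤ) : B x (c • y) = c * B x y := map_smul (intersectionForm x) c y

lemma B_sum_right (s : Finset (Fin 7 → ℤ)) : B x (∑ M ∈ s, M) = ∑ M ∈ s, B x M :=
  map_sum (intersectionForm x) id s

@[simp] lemma B_K_K : B K K = 3 := by decide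

lemma B_K_right : B x K = -3 * x 0 - ∑ i : Fin 6, x i.succ := by
  have hzero : K 0 = -3 := rfl
  have hsucc : ∀ i : Fin 6, K i.succ = 1 := by decide
  simp [B_eq_sub_sum, hzero, hsucc, mul_comm]

variable {v}

lemma three_mul_B_self_le_neg_sum_sq (hv : B v K = 0) :
    3 * B v v ≤ -∑ i : Fin 6, v i.succ ^ 2 := by
  have cauchy_schwarz : (∑ i : Fin 6, v i.succ) ^ 2 ≤ 6 * ∑ i : Fin 6, v i.succ ^ 2 := by
    simpa using sq_sum_le_card_mul_sum_sq (s := univ) (f := fun i : Fin 6 ↦ v i.succ)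
  have hsum : ∑ i : Fin 6, v i.succ = -3 * v 0 := by linarith [B_K_right v]
  rw [hsum] at cauchy_schwarz
  simp only [B_eq_sub_sum, ← sq]
  linarith

lemma B_self_neg_of_B_K_eq_zero (hv : B v K = 0) (hv0 : v ≠ 0) : B v v < 0 := by
  by_contra! hnonneg
  have hsq : ∑ i : Fin 6, v i.succ ^ 2 = 0 :=
    le_antisymm (by linarith [three_mul_B_self_le_neg_sum_sq hv])
      (sum_nonneg fun _ _ ↦ sq_nonneg _)
  have hsucc (i : Fin 6) : v i.succ = 0 :=
    pow_eq_zero_iff two_ne_zero |>.1 <|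
      (sum_eq_zero_iff_of_nonneg fun _ _ ↦ sq_nonneg _).1 hsq i (mem_univ i)
  have hzero : v 0 = 0 := by simpa [B_K_right, hsucc] using hv
  exact hv0 (funext (Fin.cases hzero hsucc))

variable (v)

lemma hodge_index : 3 * B v v ≤ B v K ^ 2 := by
  -- `w` is three times the projection of `v` to the orthogonal complement of `K`.
  set w := (3 : ℤ) • v - B v K • K with hw
  have hwK : B w K = 0 := by
    simp only [hw, B_sub_left, B_smul_left, B_K_K]
    ring
  have hww : B w w = 9 * B v v - 3 * B v K ^ 2 := by
    simp only [hw, B_sub_left, B_sub_right, B_smul_left, B_smul_right, B_K_K, B_comm K v]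
    ring
  have hsq : 0 ≤ ∑ i : Fin 6, w i.succ ^ 2 := sum_nonneg fun _ _ ↦ sq_nonneg _
  linarith [three_mul_B_self_le_neg_sum_sq hwK]

end Form

section Residual

variable {L M : Fin 7 → ℤ}

/-- The residual class `-K - L - M` of two lines: what remains of a plane section
containing both. -/
def residualClass (L M : Fin 7 → ℤ) : Fin 7 → ℤ := -K - L - M

lemma IsLine.B_K_left (hL : IsLine L) : B K L = -1 := by rw [B_comm, hL.2]

lemma IsLine.B_residualClass_K (hL : IsLine L) (hM : IsLine M) : B (residualClass L M) K = -1 := by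
  simp [residualClass, hL.2, hM.2]

lemma IsLine.B_residualClass_self (hL : IsLine L) (hM : IsLine M) :
    B (residualClass L M) (residualClass L M) = 2 * B L M - 3 := by
  simp only [residualClass, B_neg_left, B_neg_right, B_sub_left, B_sub_right, B_K_K, hL.1,
    hL.2, hM.1, hM.2, hL.B_K_left, hM.B_K_left, B_comm M L]
  ring

lemma IsLine.B_residualClass_right (hL : IsLine L) : B L (residualClass L M) = 2 - B L M := by
  simp [residualClass, hL.1, hL.2]

lemma IsLine.isLine_residualClass_iff (hL : IsLine L) (hM : IsLine M) :
    IsLine (residualClass L M) ↔ B L M = 1 := by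
  simp only [IsLine, hL.B_residualClass_self hM, hL.B_residualClass_K hM, and_true]
  lia

lemma residualClass_comm (L M : Fin 7 → ℤ) : residualClass L M = residualClass M L :=
  sub_right_comm _ _ _

lemma IsLine.B_nonneg (hL : IsLine L) (hM : IsLine M) (hne : L ≠ M) : 0 ≤ B L M := by
  have hneg : B (L - M) (L - M) < 0 :=
    B_self_neg_of_B_K_eq_zero (by simp [hL.2, hM.2]) (sub_ne_zero.2 hne)
  simp only [B_sub_left, B_sub_right, hL.1, hM.1, B_comm M L] at hneg
  lia

lemma IsLine.B_le_one (hL : IsLine L) (hM : IsLine M) : B L M ≤ 1 := by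
  have := hodge_index (residualClass L M)
  rw [hL.B_residualClass_self hM, hL.B_residualClass_K hM] at this
  lia

end Residual

section Classification

/-- The class of the exceptional curve over the `i`-th of the six blown-up points of the plane. -/
def exceptional (i : Fin 6) : Fin 7 → ℤ := Fin.cons 0 (Pi.single i 1)

/-- The class of the strict transform of a plane curve of degree `d` passing once through the
points in `s` and missing the other blown-up points. -/
def planeCurve (d : ℤ) (s : Finset (Fin 6)) : Fin 7 → ℤ :=
  Fin.cons d fun i ↦ if i ∈ s then -1 else 0

lemma B_exceptional_right (x : Fin 7 → ℤ) (i : Fin 6) : B x (exceptional i) = -x i.succ := by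
  simp [B_eq_sub_sum, exceptional, Pi.single_apply]

lemma isLine_exceptional (i : Fin 6) : IsLine (exceptional i) := by
  constructor
  · rw [B_exceptional_right]
    simp [exceptional]
  · simp [B_K_right, exceptional]

lemma isLine_planeCurve_iff {d : ℤ} {s : Finset (Fin 6)} :
    IsLine (planeCurve d s) ↔ d = 1 ∧ #s = 2 ∨ d = 2 ∧ #s = 5 := by
  have hself : B (planeCurve d s) (planeCurve d s) = d ^ 2 - #s := by
    simp [B_eq_sub_sum, planeCurve, sq]
  have hK : B (planeCurve d s) K = -3 * d + #s := by
    simp [B_K_right, planeCurve, sum_ite_mem]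
  rw [IsLine, hself, hK]
  constructor
  · rintro ⟨h₁, h₂⟩
    have hd : (d - 1) * (d - 2) = 0 := by linarith
    rcases mul_eq_zero.1 hd with hd | hd
    · left; lia
    · right; lia
  · rintro (⟨rfl, hs⟩ | ⟨rfl, hs⟩) <;> simp [hs]

lemma IsLine.eq_exceptional_or_eq_planeCurve {L : Fin 7 → ℤ} (hL : IsLine L) :
    (∃ i, exceptional i = L) ∨ ∃ d s, planeCurve d s = L := by
  refine or_iff_not_imp_left.2 fun hne ↦ ⟨L 0, ({i | L i.succ = -1} : Finset (Fin 6)), ?_⟩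
  push Not at hne
  funext j
  refine Fin.cases rfl (fun i ↦ ?_) j
  have hlower : 0 ≤ -L i.succ := by
    simpa only [B_exceptional_right] using hL.B_nonneg (isLine_exceptional i) (hne i).symm
  have hupper : -L i.succ ≤ 1 := by
    simpa only [B_exceptional_right] using hL.B_le_one (isLine_exceptional i)
  simp only [planeCurve, Fin.cons_succ, mem_filter_univ]
  split_ifs <;> lia

/-- The 27 lines: the exceptional curves, the strict transforms of the lines through two of the six
blown-up points, and those of the conics through five of them. -/
def lines : Finset (Fin 7 → ℤ) :=
  univ.image exceptional ∪ (univ.powersetCard 2).image (planeCurve 1) ∪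
    (univ.powersetCard 5).image (planeCurve 2)

lemma mem_lines {L : Fin 7 → ℤ} : L ∈ lines ↔ IsLine L := by
  simp only [lines, mem_union, mem_image, mem_univ, true_and, mem_powersetCard_univ]
  constructor
  · rintro ((⟨i, rfl⟩ | ⟨s, hs, rfl⟩) | ⟨s, hs, rfl⟩)
    · exact isLine_exceptional i
    · exact isLine_planeCurve_iff.2 (.inl ⟨rfl, hs⟩)
    · exact isLine_planeCurve_iff.2 (.inr ⟨rfl, hs⟩)
  · intro hL
    rcases hL.eq_exceptional_or_eq_planeCurve with ⟨i, rfl⟩ | ⟨d, s, rfl⟩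
    · exact .inl (.inl ⟨i, rfl⟩)
    · rcases isLine_planeCurve_iff.1 hL with ⟨rfl, hs⟩ | ⟨rfl, hs⟩
      · exact .inl (.inr ⟨s, hs, rfl⟩)
      · exact .inr ⟨s, hs, rfl⟩

lemma sum_lines : ∑ M ∈ lines, M = (-9 : ℤ) • K := by
  decide

end Classification

section Triangles

variable {L M : Fin 7 → ℤ} {T : Finset (Fin 7 → ℤ)}

/-- The lines that meet `L`, i.e. have intersection number 1 with it. -/
def linesMeeting (L : Fin 7 → ℤ) : Finset (Fin 7 → ℤ) := {M ∈ lines | B L M = 1}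

lemma mem_linesMeeting : M ∈ linesMeeting L ↔ IsLine M ∧ B L M = 1 := by
  rw [linesMeeting, mem_filter, mem_lines]

lemma IsLine.notMem_linesMeeting (hL : IsLine L) : L ∉ linesMeeting L := by
  simp [mem_linesMeeting, hL.1]

lemma IsLine.card_linesMeeting (hL : IsLine L) : #(linesMeeting L) = 10 := by
  have hsum : ∑ M ∈ lines, B L M = 9 := by
    rw [← B_sum_right, sum_lines, B_smul_right, hL.2]
    rfl
  have hmem : L ∈ lines := mem_lines.2 hL
  have hindicator : ∀ M ∈ lines.erase L, B L M = if B L M = 1 then 1 else 0 := by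
    intro M hM
    obtain ⟨hne, hM⟩ := mem_erase.1 hM
    have hlower := hL.B_nonneg (mem_lines.1 hM) hne.symm
    have hupper := hL.B_le_one (mem_lines.1 hM)
    split_ifs <;> lia
  have herase : (lines.erase L).filter (B L · = 1) = linesMeeting L := by
    rw [filter_erase]
    exact erase_eq_of_notMem hL.notMem_linesMeeting
  rw [← add_sum_erase _ _ hmem, sum_congr rfl hindicator, sum_boole, herase, hL.1] at hsum
  lia

/-- The plane section consisting of `L`, `M` and their residual class. -/
def triangleOf (L M : Fin 7 → ℤ) : Finset (Fin 7 → ℤ) := {L, M, residualClass L M}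

lemma IsLine.isTriangle_triangleOf (hL : IsLine L) (hM : M ∈ linesMeeting L) :
    IsTriangle (triangleOf L M) := by
  obtain ⟨hM, hLM⟩ := mem_linesMeeting.1 hM
  have hN : IsLine (residualClass L M) := (hL.isLine_residualClass_iff hM).2 hLM
  have ne_of_B_eq_one {x y : Fin 7 → ℤ} (hx : IsLine x) (hxy : B x y = 1) : x ≠ y := by
    rintro rfl
    exact absurd (hx.1.symm.trans hxy) (by decide)
  have hne : L ≠ M := ne_of_B_eq_one hL hLM
  have hneL : L ≠ residualClass L M :=
    ne_of_B_eq_one hL (by rw [hL.B_residualClass_right, hLM]; rfl)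
  have hneM : M ≠ residualClass L M :=
    ne_of_B_eq_one hM (by rw [residualClass_comm, hM.B_residualClass_right, B_comm, hLM]; rfl)
  refine ⟨card_eq_three.2 ⟨_, _, _, hne, hneL, hneM, rfl⟩, ?_, ?_⟩
  · simp [triangleOf, hL, hM, hN]
  · rw [triangleOf, sum_insert (by simp [hne, hneL]), sum_pair hneM, residualClass]
    abel

lemma IsTriangle.card_erase (hT : IsTriangle T) (hL : L ∈ T) : #(T.erase L) = 2 := by
  rw [card_erase_of_mem hL, hT.1]

lemma IsTriangle.triangleOf_eq (hT : IsTriangle T) (hL : L ∈ T) (hM : M ∈ T.erase L) :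
    triangleOf L M = T := by
  obtain ⟨N, hN⟩ : ∃ N, (T.erase L).erase M = {N} :=
    card_eq_one.1 (by rw [card_erase_of_mem hM, hT.card_erase hL])
  have hsum : L + (M + N) = -K := by
    rw [← hT.2.2, ← add_sum_erase _ _ hL, ← add_sum_erase _ _ hM, hN, sum_singleton]
  have hres : residualClass L M = N := by
    rw [residualClass, ← hsum]
    abel
  rw [triangleOf, hres, ← hN, insert_erase hM, insert_erase hL]

lemma IsTriangle.erase_subset_linesMeeting (hT : IsTriangle T) (hL : L ∈ T) :
    T.erase L ⊆ linesMeeting L := by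
  intro M hM
  have hLineM : IsLine M := hT.2.1 M (mem_of_mem_erase hM)
  have hres : residualClass L M ∈ T := by
    rw [← hT.triangleOf_eq hL hM]
    simp [triangleOf]
  exact mem_linesMeeting.2
    ⟨hLineM, ((hT.2.1 L hL).isLine_residualClass_iff hLineM).1 (hT.2.1 _ hres)⟩

/-- The triangles containing the line `L`, each obtained from a line meeting `L`. -/
def trianglesThrough (L : Fin 7 → ℤ) : Finset (Finset (Fin 7 → ℤ)) :=
  (linesMeeting L).image (triangleOf L)

lemma IsLine.mem_trianglesThrough (hL : IsLine L) :
    T ∈ trianglesThrough L ↔ IsTriangle T ∧ L ∈ T := by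
  rw [trianglesThrough, mem_image]
  constructor
  · rintro ⟨M, hM, rfl⟩
    exact ⟨hL.isTriangle_triangleOf hM, mem_insert_self _ _⟩
  · rintro ⟨hT, hLT⟩
    obtain ⟨M, hM⟩ : (T.erase L).Nonempty := card_pos.1 (by simp [hT.card_erase hLT])
    exact ⟨M, hT.erase_subset_linesMeeting hLT hM, hT.triangleOf_eq hLT hM⟩

lemma IsTriangle.filter_triangleOf_eq (hT : IsTriangle T) (hL : L ∈ T) :
    {M ∈ linesMeeting L | triangleOf L M = T} = T.erase L := by
  ext M
  rw [mem_filter]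
  constructor
  · rintro ⟨hM, rfl⟩
    refine mem_erase.2 ⟨?_, by simp [triangleOf]⟩
    rintro rfl
    exact (hT.2.1 _ hL).notMem_linesMeeting hM
  · exact fun hM ↦ ⟨hT.erase_subset_linesMeeting hL hM, hT.triangleOf_eq hL hM⟩

lemma IsLine.card_linesMeeting_eq_card_trianglesThrough_mul_two (hL : IsLine L) :
    #(linesMeeting L) = #(trianglesThrough L) * 2 := by
  rw [card_eq_sum_card_image (triangleOf L)]
  refine sum_const_nat fun T hT ↦ ?_
  obtain ⟨hT, hLT⟩ := hL.mem_trianglesThrough.1 hT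
  rw [hT.filter_triangleOf_eq hLT, hT.card_erase hLT]

end Triangles

/-- Every line belongs to exactly 5 triangles. -/
theorem five_triangles_through_each_line (L : Fin 7 → ℤ) (hL : IsLine L) :
    {T : Finset (Fin 7 → ℤ) | IsTriangle T ∧ L ∈ T}.Finite ∧
      {T : Finset (Fin 7 → ℤ) | IsTriangle T ∧ L ∈ T}.ncard = 5 := by
  have hset : {T : Finset (Fin 7 → ℤ) | IsTriangle T ∧ L ∈ T} = trianglesThrough L :=
    Set.ext fun _ ↦ hL.mem_trianglesThrough.symm
  have hcard : #(trianglesThrough L) = 5 := by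
    linarith [hL.card_linesMeeting, hL.card_linesMeeting_eq_card_trianglesThrough_mul_two]
  rw [hset, Set.ncard_coe_finset]
  exact ⟨finite_toSet _, hcard⟩
end

section
/- Let 𝒱 be the ℚ-vector space of functions from the set of lines to ℚ, and for each triangle T let χ_T ∈ 𝒱 be its indicator function (value 1 at each of the three lines of T and 0 at every other line). The ℚ-linear span of the 45 vectors χ_T, as T ranges over all triangles, is a subspace of 𝒱 of dimension exactly 21. -/
/-- The ℚ-vector space of functions from the set of lines to ℚ. -/
abbrev Vq : Type := {L : Fin 7 → ℤ // IsLine L} → ℚ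

/-- The indicator function of a triangle: value 1 at each of its lines, 0 elsewhere. -/
def chi (T : Finset (Fin 7 → ℤ)) : Vq :=
  fun L => if (L : Fin 7 → ℤ) ∈ T then 1 else 0

/-!
Send `f : Vq` to the class `∑ f(L) L` in `Pic ⊗ ℚ`. A triangle has class `-K`, so the span of the
`χ_T` lies in the preimage of the line `ℚ K`. Since the 27 lines span `Pic ⊗ ℚ`, this preimage has
dimension `27 - 7 + 1 = 21`.

Conversely, two meeting lines lie in exactly one triangle and every line lies in five, so
`∑_{T ∋ L} χ_T = 6 δ_L + ⟨L, ·⟩`. If `f` has class `c K`, the combination of these vectors with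
weights `f(L)` is `6 f - c 1`. For `f = 1`, of class `-9 K`, it is `15 · 1`. Hence `1`, and then
every `f` with class in `ℚ K`, is in the span.
-/

namespace CubicSurface

open Finset

theorem B_comm (x y : Fin 7 → ℤ) : B x y = B y x := by
  unfold B
  ring

theorem exists_eq_ite_of_sum_sq_eq {ι : Type*} [Fintype ι] [DecidableEq ι] {ε : ℤ} (hε : IsUnit ε)
    {u : ι → ℤ} (h : ∑ i, u i ^ 2 = ε * ∑ i, u i) :
    ∃ s : Finset ι, (#s : ℤ) = ∑ i, u i ^ 2 ∧ u = fun i ↦ if i ∈ s then ε else 0 := by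
  have ε_sq : ε ^ 2 = 1 := by rcases Int.isUnit_iff.1 hε with rfl | rfl <;> rfl
  have nonneg (i : ι) : 0 ≤ u i ^ 2 - ε * u i := by
    have := Int.le_self_sq (ε * u i)
    rwa [mul_pow, ε_sq, one_mul, ← sub_nonneg] at this
  have sum_eq_zero : ∑ i, (u i ^ 2 - ε * u i) = 0 := by
    rw [sum_sub_distrib, ← mul_sum, h, sub_self]
  have zero_or (i : ι) : u i = 0 ∨ u i = ε := by
    have := (sum_eq_zero_iff_of_nonneg fun i _ ↦ nonneg i).1 sum_eq_zero i (mem_univ i)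
    rwa [sq, ← sub_mul, mul_eq_zero, sub_eq_zero, or_comm] at this
  refine ⟨univ.filter (u · = ε), ?_, funext fun i ↦ ?_⟩
  · rw [natCast_card_filter]
    refine sum_congr rfl fun i _ ↦ ?_
    rcases zero_or i with hi | hi <;> simp [hi, ε_sq, hε.ne_zero.symm]
  · rcases zero_or i with hi | hi <;> simp [hi, eq_comm]

/-- The class `d ℓ + ε ∑_{i ∈ s} eᵢ` on the blow-up of the plane in six points, where `ℓ` is the
class of a line in the plane and the `eᵢ` are the exceptional curves. -/
def blowupClass (d ε : ℤ) (s : Finset (Fin 6)) : Fin 7 → ℤ :=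
  Fin.cons d fun i ↦ if i ∈ s then ε else 0

/-- The 27 lines: the six exceptional curves, the strict transforms of the lines through two of
the blown-up points, and those of the conics through five of them. -/
def lines : Finset (Fin 7 → ℤ) :=
  (powersetCard 1 univ).image (blowupClass 0 1) ∪
  (powersetCard 2 univ).image (blowupClass 1 (-1)) ∪
  (powersetCard 5 univ).image (blowupClass 2 (-1))

theorem isLine_cons_iff (d : ℤ) (u : Fin 6 → ℤ) :
    IsLine (Fin.cons d u : Fin 7 → ℤ) ↔ ∑ i, u i ^ 2 = d ^ 2 + 1 ∧ ∑ i, u i = 1 - 3 * d := by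
  have self : B (Fin.cons d u : Fin 7 → ℤ) (Fin.cons d u : Fin 7 → ℤ) = d ^ 2 - ∑ i, u i ^ 2 := by
    change d * d - u 0 * u 0 - u 1 * u 1 - u 2 * u 2 - u 3 * u 3 - u 4 * u 4 - u 5 * u 5 = _
    rw [Fin.sum_univ_six]
    ring
  have canonical : B (Fin.cons d u : Fin 7 → ℤ) K = -3 * d - ∑ i, u i := by
    change d * (-3) - u 0 * 1 - u 1 * 1 - u 2 * 1 - u 3 * 1 - u 4 * 1 - u 5 * 1 = _
    rw [Fin.sum_univ_six]
    ring
  rw [IsLine, self, canonical]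
  constructor <;> rintro ⟨h₁, h₂⟩ <;> constructor <;> linarith

theorem isLine_of_mem_lines : ∀ L ∈ lines, IsLine L := by
  unfold IsLine
  decide +kernel

theorem mem_lines_of_isLine {L : Fin 7 → ℤ} (hL : IsLine L) : L ∈ lines := by
  obtain ⟨d, u, rfl⟩ : ∃ d u, L = Fin.cons d u := ⟨L 0, Fin.tail L, (Fin.cons_self_tail L).symm⟩
  obtain ⟨sum_sq, sum⟩ := (isLine_cons_iff d u).1 hL
  have cauchy_schwarz : (1 - 3 * d) ^ 2 ≤ 6 * (d ^ 2 + 1) := by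
    simpa [sum_sq, sum] using sq_sum_le_card_mul_sum_sq (s := univ) (f := u)
  have d_nonneg : 0 ≤ d := by nlinarith
  have d_le_two : d ≤ 2 := by nlinarith
  have mem {ε : ℤ} (hε : IsUnit ε) (h : d ^ 2 + 1 = ε * (1 - 3 * d)) :
      ∃ s : Finset (Fin 6), (#s : ℤ) = d ^ 2 + 1 ∧ Fin.cons d u = blowupClass d ε s := by
    obtain ⟨s, hs, rfl⟩ := exists_eq_ite_of_sum_sq_eq hε (u := u) (by rw [sum_sq, sum, h])
    exact ⟨s, hs.trans sum_sq, rfl⟩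
  simp only [lines, mem_union, mem_image, mem_powersetCard_univ]
  interval_cases d
  · obtain ⟨s, hs, hu⟩ := mem (ε := 1) (by decide) (by norm_num)
    exact .inl (.inl ⟨s, by exact_mod_cast hs, hu.symm⟩)
  · obtain ⟨s, hs, hu⟩ := mem (ε := -1) (by decide) (by norm_num)
    exact .inl (.inr ⟨s, by exact_mod_cast hs, hu.symm⟩)
  · obtain ⟨s, hs, hu⟩ := mem (ε := -1) (by decide) (by norm_num)
    exact .inr ⟨s, by exact_mod_cast hs, hu.symm⟩

theorem mem_lines {L : Fin 7 → ℤ} : L ∈ lines ↔ IsLine L :=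
  ⟨isLine_of_mem_lines L, mem_lines_of_isLine⟩

/-- The type of lines, which indexes the coordinates of `Vq`. -/
abbrev Line : Type := {L : Fin 7 → ℤ // IsLine L}

instance : Fintype Line := Fintype.subtype lines fun _ ↦ mem_lines

theorem card_line : Fintype.card Line = 27 :=
  (Fintype.card_of_subtype lines fun _ ↦ mem_lines).trans (by decide +kernel)

theorem sum_lines : ∑ L ∈ lines, L = -9 • K := by decide +kernel

theorem B_eq_zero_or_one_of_ne : ∀ L ∈ lines, ∀ M ∈ lines, L ≠ M → B L M = 0 ∨ B L M = 1 := by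
  decide +kernel

/-- The finite set of lines meeting `L`. -/
def meeting (L : Fin 7 → ℤ) : Finset (Fin 7 → ℤ) := lines.filter (B L · = 1)

theorem mem_meeting {L M : Fin 7 → ℤ} : M ∈ meeting L ↔ IsLine M ∧ B L M = 1 := by
  rw [meeting, mem_filter, mem_lines]

theorem mem_meeting_comm {L M : Fin 7 → ℤ} (hL : IsLine L) (hM : M ∈ meeting L) :
    L ∈ meeting M :=
  mem_meeting.2 ⟨hL, B_comm L M ▸ (mem_meeting.1 hM).2⟩

theorem card_meeting : ∀ L ∈ lines, #(meeting L) = 10 := by decide +kernel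

/-- The residual class of `L` and `M`: if these are meeting lines, it is the third line in the
plane they span. -/
def residual (L M : Fin 7 → ℤ) : Fin 7 → ℤ := -K - L - M

theorem residual_comm (L M : Fin 7 → ℤ) : residual L M = residual M L := sub_right_comm _ _ _

theorem residual_residual (L M : Fin 7 → ℤ) : residual L (residual L M) = M := by
  unfold residual
  abel

theorem eq_residual_comm {L M N : Fin 7 → ℤ} : N = residual L M ↔ M = residual L N := by
  constructor <;> rintro rfl <;> exact (residual_residual _ _).symm

theorem isLine_residual {L M : Fin 7 → ℤ} (hL : IsLine L) (hM : IsLine M) (h : B L M = 1) :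
    IsLine (residual L M) := by
  have hK : B K K = 3 := by decide
  obtain ⟨hLL, hLK⟩ := hL
  obtain ⟨hMM, hMK⟩ := hM
  unfold IsLine
  simp only [B, residual, Pi.sub_apply, Pi.neg_apply] at *
  constructor
  · linear_combination hK + hLL + hMM + 2 * hLK + 2 * hMK + 2 * h
  · linear_combination -hK - hLK - hMK

theorem B_residual {L M : Fin 7 → ℤ} (hL : IsLine L) : B L (residual L M) = 2 - B L M := by
  obtain ⟨hLL, hLK⟩ := hL
  simp only [B, residual, Pi.sub_apply, Pi.neg_apply] at *
  linear_combination -hLL - hLK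

theorem residual_mem_meeting {L M : Fin 7 → ℤ} (hL : IsLine L) (hM : M ∈ meeting L) :
    residual L M ∈ meeting L := by
  obtain ⟨hM, hLM⟩ := mem_meeting.1 hM
  exact mem_meeting.2 ⟨isLine_residual hL hM hLM, by rw [B_residual hL, hLM]; norm_num⟩

theorem residual_mem_meeting_iff {L M : Fin 7 → ℤ} (hL : IsLine L) :
    residual L M ∈ meeting L ↔ M ∈ meeting L :=
  ⟨fun h ↦ residual_residual L M ▸ residual_mem_meeting hL h, residual_mem_meeting hL⟩

theorem ne_of_mem_meeting {L M : Fin 7 → ℤ} (hL : IsLine L) (hM : M ∈ meeting L) : L ≠ M := by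
  rintro rfl
  have := hL.1.symm.trans (mem_meeting.1 hM).2
  norm_num at this

theorem ne_residual {L M : Fin 7 → ℤ} (hL : IsLine L) (hM : M ∈ meeting L) :
    M ≠ residual L M := by
  have hM' := (mem_meeting.1 hM).1
  rw [residual_comm]
  exact ne_of_mem_meeting hM' (residual_mem_meeting hM' (mem_meeting_comm hL hM))

/-- The triangle containing two meeting lines `L` and `M`. -/
def triangle (L M : Fin 7 → ℤ) : Finset (Fin 7 → ℤ) := {L, M, residual L M}

theorem isTriangle_triangle {L M : Fin 7 → ℤ} (hL : IsLine L) (hM : M ∈ meeting L) :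
    IsTriangle (triangle L M) := by
  have hR := residual_mem_meeting hL hM
  have hLM := ne_of_mem_meeting hL hM
  have hLR := ne_of_mem_meeting hL hR
  have hMR := ne_residual hL hM
  refine ⟨card_eq_three.2 ⟨_, _, _, hLM, hLR, hMR, rfl⟩, ?_, ?_⟩
  · simp only [triangle, forall_mem_insert, mem_singleton, forall_eq]
    exact ⟨hL, (mem_meeting.1 hM).1, (mem_meeting.1 hR).1⟩
  · rw [triangle, sum_insert (by simp [hLM, hLR]), sum_pair hMR, residual]
    abel

theorem chi_triangle {L M : Fin 7 → ℤ} (hL : IsLine L) (hM : M ∈ meeting L) (N : Line) :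
    chi (triangle L M) N =
      (if N = L then 1 else 0) + (if M = N then 1 else 0) + if M = residual L N then 1 else 0 := by
  have hLM := ne_of_mem_meeting hL hM
  have hLR := ne_of_mem_meeting hL (residual_mem_meeting hL hM)
  have hMR := ne_residual hL hM
  simp only [chi, triangle, mem_insert, mem_singleton, eq_comm (a := M) (b := N.1),
    ← eq_residual_comm (L := L) (M := M)]
  split_ifs <;> simp_all

/-- The vector `6 δ_L + ⟨L, ·⟩`, a row of the Gram matrix of the lines shifted by `6`. -/
def shiftedGram (L : Line) : Vq := fun M ↦ (if M = L then 6 else 0) + (B L M : ℚ)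

-- Each of the five triangles through `L` arises from two choices of `M`.
theorem sum_chi_triangle (L : Line) :
    ∑ M ∈ meeting L, chi (triangle L M) = (2 : ℚ) • shiftedGram L := by
  ext N
  have count : ∑ M ∈ meeting L, chi (triangle L M) N =
      10 * (if N = L then 1 else 0) + 2 * if N.1 ∈ meeting L then 1 else 0 := by
    rw [sum_congr rfl fun M hM ↦ chi_triangle L.2 hM N]
    simp only [sum_add_distrib, sum_ite_eq', residual_mem_meeting_iff L.2, sum_const,
      card_meeting L (mem_lines.2 L.2), Subtype.ext_iff]
    ring
  rw [Finset.sum_apply, count]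
  rcases eq_or_ne N L with rfl | hNL
  · norm_num [shiftedGram, mem_meeting, N.2.1]
  · rcases B_eq_zero_or_one_of_ne L (mem_lines.2 L.2) N (mem_lines.2 N.2)
      (Subtype.coe_ne_coe.2 hNL.symm) with h | h <;>
      simp [shiftedGram, mem_meeting, N.2, hNL, h]

/-- The span of the indicator vectors of triangles. -/
abbrev triangleSpan : Submodule ℚ Vq := Submodule.span ℚ (chi '' {T | IsTriangle T})

theorem shiftedGram_mem_triangleSpan (L : Line) : shiftedGram L ∈ triangleSpan := by
  rw [← Submodule.smul_mem_iff _ (two_ne_zero (α := ℚ)), ← sum_chi_triangle]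
  exact sum_mem fun M hM ↦
    Submodule.subset_span (Set.mem_image_of_mem _ (isTriangle_triangle L.2 hM))

/-- The inclusion of the Picard lattice in its rational extension. -/
def rationalClass : (Fin 7 → ℤ) →+ (Fin 7 → ℚ) := (Int.castAddHom ℚ).compLeft (Fin 7)

theorem rationalClass_apply (x : Fin 7 → ℤ) (i : Fin 7) : rationalClass x i = x i := rfl

/-- The class `∑ f(L) L` of a rational combination of lines. -/
def classMap : Vq →ₗ[ℚ] (Fin 7 → ℚ) :=
  Fintype.linearCombination ℚ fun L : Line ↦ rationalClass L

theorem classMap_apply (f : Vq) : classMap f = ∑ L : Line, f L • rationalClass L := rfl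

theorem classMap_chi {T : Finset (Fin 7 → ℤ)} (hT : ∀ L ∈ T, IsLine L) :
    classMap (chi T) = rationalClass (∑ L ∈ T, L) := by
  have hT : T ⊆ lines := fun L hL ↦ mem_lines.2 (hT L hL)
  simp only [classMap_apply, chi, ite_smul, one_smul, zero_smul]
  rw [← sum_subtype lines (fun _ ↦ mem_lines) fun L ↦ if L ∈ T then rationalClass L else 0,
    sum_ite_mem, inter_eq_right.2 hT, map_sum]

theorem classMap_one : classMap 1 = (-9 : ℚ) • rationalClass K := by
  have chi_lines : chi lines = 1 := by
    ext L
    simp [chi, mem_lines, L.2]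
  rw [← chi_lines, classMap_chi isLine_of_mem_lines, sum_lines, map_zsmul]
  norm_cast

theorem rationalClass_mem_range {L : Fin 7 → ℤ} (hL : IsLine L) :
    rationalClass L ∈ LinearMap.range classMap :=
  ⟨chi {L}, by rw [classMap_chi (by simpa using hL), sum_singleton]⟩

theorem range_classMap : LinearMap.range classMap = ⊤ := by
  have mem (i : Fin 7) : rationalClass (Pi.single i 1) ∈ LinearMap.range classMap := by
    have exceptional (j : Fin 6) : IsLine (Pi.single j.succ 1) := by
      unfold IsLine
      decide +revert
    cases i using Fin.cases with
    | zero =>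
      have secant : IsLine (blowupClass 1 (-1) {0, 1}) := by
        unfold IsLine
        decide
      have decomposition : (Pi.single 0 1 : Fin 7 → ℤ) =
          blowupClass 1 (-1) {0, 1} + Pi.single 1 1 + Pi.single 2 1 := by decide
      rw [decomposition, map_add, map_add]
      exact add_mem (add_mem (rationalClass_mem_range secant)
        (rationalClass_mem_range (exceptional 0))) (rationalClass_mem_range (exceptional 1))
    | succ j => exact rationalClass_mem_range (exceptional j)
  rw [eq_top_iff, ← (Pi.basisFun ℚ (Fin 7)).span_eq, Submodule.span_le]
  rintro _ ⟨i, rfl⟩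
  have cast_single : rationalClass (Pi.single i 1) = Pi.single i 1 := by
    ext j
    simp [rationalClass_apply, Pi.single_apply]
  rw [Pi.basisFun_apply, ← cast_single]
  exact mem i

/-- The rational linear extension of `⟨x, ·⟩`. -/
def pairing (x : Fin 7 → ℤ) : (Fin 7 → ℚ) →ₗ[ℚ] ℚ :=
  Fintype.linearCombination ℚ fun i ↦ (B x (Pi.single i 1) : ℚ)

theorem pairing_rationalClass (x y : Fin 7 → ℤ) : pairing x (rationalClass y) = B x y := by
  simp only [pairing, B, Fintype.linearCombination_apply, rationalClass_apply, smul_eq_mul,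
    Fin.sum_univ_seven, Pi.single_apply, Fin.reduceEq, if_true, if_false]
  push_cast
  ring

theorem pairing_classMap (x : Fin 7 → ℤ) (f : Vq) :
    pairing x (classMap f) = ∑ L : Line, f L * B x L := by
  simp only [classMap_apply, map_sum, map_smul, pairing_rationalClass, smul_eq_mul]

theorem sum_smul_shiftedGram {f : Vq} {c : ℚ} (hf : classMap f = c • rationalClass K) :
    ∑ L, f L • shiftedGram L = (6 : ℚ) • f - c • 1 := by
  ext M
  have hM : ∑ L : Line, f L * B L M = -c := by
    simp only [B_comm _ M.1]
    rw [← pairing_classMap, hf, map_smul, pairing_rationalClass, M.2.2]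
    simp
  simp only [Finset.sum_apply, Pi.smul_apply, Pi.sub_apply, Pi.one_apply, smul_eq_mul, shiftedGram,
    mul_add, mul_ite, mul_zero, sum_add_distrib, sum_ite_eq, mem_univ, if_true, hM]
  ring

theorem one_mem_triangleSpan : (1 : Vq) ∈ triangleSpan := by
  have h : ∑ L, shiftedGram L = (15 : ℚ) • (1 : Vq) := by
    have := sum_smul_shiftedGram classMap_one
    simp only [Pi.one_apply, one_smul] at this
    rw [this, ← sub_smul]
    norm_num
  rw [← Submodule.smul_mem_iff _ (by norm_num : (15 : ℚ) ≠ 0), ← h]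
  exact sum_mem fun L _ ↦ shiftedGram_mem_triangleSpan L

theorem mem_triangleSpan_of_classMap_eq {f : Vq} {c : ℚ}
    (hf : classMap f = c • rationalClass K) : f ∈ triangleSpan := by
  have h : (6 : ℚ) • f = ∑ L, f L • shiftedGram L + c • 1 := by
    rw [sum_smul_shiftedGram hf, sub_add_cancel]
  rw [← Submodule.smul_mem_iff _ (by norm_num : (6 : ℚ) ≠ 0), h]
  exact add_mem (sum_mem fun L _ ↦ Submodule.smul_mem _ _ (shiftedGram_mem_triangleSpan L))
    (Submodule.smul_mem _ _ one_mem_triangleSpan)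

theorem triangleSpan_eq_comap : triangleSpan = (ℚ ∙ rationalClass K).comap classMap := by
  apply le_antisymm
  · rw [Submodule.span_le]
    rintro _ ⟨T, ⟨-, hT, hsum⟩, rfl⟩
    rw [SetLike.mem_coe, Submodule.mem_comap, classMap_chi hT, hsum, map_neg]
    exact neg_mem (Submodule.mem_span_singleton_self _)
  · intro f hf
    obtain ⟨c, hc⟩ := Submodule.mem_span_singleton.1 hf
    exact mem_triangleSpan_of_classMap_eq hc.symm

theorem finrank_comap_add_finrank_of_range_eq_top {k V W : Type*} [DivisionRing k]
    [AddCommGroup V] [Module k V] [AddCommGroup W] [Module k W] [FiniteDimensional k V]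
    {f : V →ₗ[k] W} (hf : LinearMap.range f = ⊤) (p : Submodule k W) :
    Module.finrank k (p.comap f) + Module.finrank k W =
      Module.finrank k V + Module.finrank k p := by
  have : FiniteDimensional k W := .of_surjective f (LinearMap.range_eq_top.1 hf)
  have rank_nullity := (p.mkQ ∘ₗ f).finrank_range_add_finrank_ker
  rw [LinearMap.range_comp, hf, Submodule.map_top, Submodule.range_mkQ, finrank_top,
    LinearMap.ker_comp, Submodule.ker_mkQ] at rank_nullity
  have quotient := p.finrank_quotient_add_finrank
  lia

end CubicSurface

/-- The ℚ-linear span of the 45 indicator vectors of triangles has dimension 21. -/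
theorem triangle_span_dim_21 :
    Module.finrank ℚ ↥(Submodule.span ℚ (chi '' {T | IsTriangle T})) = 21 := by
  have hK : CubicSurface.rationalClass K ≠ 0 := fun h ↦ by
    simpa [CubicSurface.rationalClass_apply, K] using congrFun h 0
  have h := CubicSurface.finrank_comap_add_finrank_of_range_eq_top CubicSurface.range_classMap
    (ℚ ∙ CubicSurface.rationalClass K)
  rw [← CubicSurface.triangleSpan_eq_comap, Module.finrank_fintype_fun_eq_card,
    Module.finrank_fintype_fun_eq_card, CubicSurface.card_line, Fintype.card_fin,
    finrank_span_singleton hK] at h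
  lia
end
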